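/- Let n ≥ 1 and let σ, a ∈ ℝ^n with σ_1 ≥ σ_2 ≥ ... ≥ σ_n. Then the minimum, over all doubly stochastic matrices Π ∈ ℝ^{n×n} (i.e. Π_{ij} ≥ 0 with every row sum and every column sum equal to 1), of Σ_{i=1}^n (Πσ)_i · a_i equals Σ_{i=1}^n σ_i · a_{(i)}, where a_{(1)} ≤ a_{(2)} ≤ ... ≤ a_{(n)} is the nondecreasing rearrangement of the components of a. -/

import Mathlib

/-! By Birkhoff's theorem, a concave function on the doubly stochastic matrices is bounded below, at
each of them, by its value at some permutation matrix. For the linear functional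
`M ↦ ∑ i, (Mσ)ᵢ aᵢ` these values are `∑ i, σ (τ i) * a i`, and the rearrangement inequality
identifies the smallest of them. -/

open scoped Matrix

section DoublyStochastic

variable {R ι : Type*} [Field R] [LinearOrder R] [IsStrictOrderedRing R]
  [Fintype ι] [DecidableEq ι]

lemma exists_perm_map_permMatrix_le_of_concaveOn {β : Type*} [AddCommGroup β] [LinearOrder β]
    [IsOrderedAddMonoid β] [Module R β] [IsStrictOrderedModule R β] {f : Matrix ι ι R → β}
    (hf : ConcaveOn R (doublyStochastic R ι) f) {M : Matrix ι ι R}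
    (hM : M ∈ doublyStochastic R ι) : ∃ τ : Equiv.Perm ι, f (τ.permMatrix R) ≤ f M := by
  rw [doublyStochastic_eq_convexHull_permMatrix] at hf
  rw [← SetLike.mem_coe, doublyStochastic_eq_convexHull_permMatrix] at hM
  obtain ⟨_, ⟨τ, rfl⟩, hτ⟩ := hf.exists_le_of_mem_convexHull (subset_convexHull R _) hM
  exact ⟨τ, hτ⟩

lemma dotProduct_comp_perm_le_mulVec_dotProduct {x y : ι → R} {π : Equiv.Perm ι}
    (hxy : Antivary x (y ∘ π)) {M : Matrix ι ι R} (hM : M ∈ doublyStochastic R ι) :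
    x ⬝ᵥ (y ∘ π) ≤ (M *ᵥ x) ⬝ᵥ y := by
  let objective : Matrix ι ι R →ₗ[R] R :=
    (dotProductBilin R R).flip y ∘ₗ (Matrix.mulVecBilin R R).flip x
  obtain ⟨τ, hτ⟩ := exists_perm_map_permMatrix_le_of_concaveOn
    (objective.concaveOn convex_doublyStochastic) hM
  calc x ⬝ᵥ (y ∘ π) ≤ (x ∘ (π.trans τ)) ⬝ᵥ (y ∘ π) := hxy.sum_mul_le_sum_comp_perm_mul
    _ = (x ∘ τ) ⬝ᵥ y := comp_equiv_dotProduct_comp_equiv (x ∘ τ) y π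
    _ = (τ.permMatrix R *ᵥ x) ⬝ᵥ y := by rw [Matrix.permMatrix_mulVec]
    _ ≤ (M *ᵥ x) ⬝ᵥ y := hτ

theorem stmt_19_general {σ a : ι → R} {π : Equiv.Perm ι} (hσa : Antivary σ (a ∘ π)) :
    IsLeast ((fun M : Matrix ι ι R ↦ (M *ᵥ σ) ⬝ᵥ a) '' doublyStochastic R ι)
      (σ ⬝ᵥ (a ∘ π)) := by
  have permMatrix_attains : (π⁻¹.permMatrix R *ᵥ σ) ⬝ᵥ a = σ ⬝ᵥ (a ∘ π) := by
    rw [Matrix.permMatrix_mulVec, Equiv.Perm.inv_def, comp_equiv_symm_dotProduct]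
  refine ⟨⟨π⁻¹.permMatrix R, permMatrix_mem_doublyStochastic, permMatrix_attains⟩, ?_⟩
  rintro _ ⟨M, hM, rfl⟩
  exact dotProduct_comp_perm_le_mulVec_dotProduct hσa hM

end DoublyStochastic

theorem stmt_19 (n : ℕ) (hn : 1 ≤ n) (σ a : Fin n → ℝ)
    (hσ : Antitone σ)
    (π : Equiv.Perm (Fin n)) (hπ : Monotone (fun i => a (π i))) :
    IsLeast {val : ℝ | ∃ P : Fin n → Fin n → ℝ,
        (∀ i j, 0 ≤ P i j) ∧
        (∀ i, ∑ j, P i j = 1) ∧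
        (∀ j, ∑ i, P i j = 1) ∧
        val = ∑ i, (∑ j, P i j * σ j) * a i}
      (∑ i, σ i * a (π i)) := by
  simpa only [Set.image, SetLike.mem_coe, mem_doublyStochastic_iff_sum, and_assoc, eq_comm]
    using! stmt_19_general (hσ.antivary hπ)
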